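/- Let H be a real Hilbert space and let f, g : H → ℝ ∪ {+∞} satisfy Assumptions A1–A2 (f, g proper, lower semicontinuous, convex, dom g ⊆ dom f, f Fréchet differentiable on an open set containing dom g, ∇f uniformly continuous on bounded subsets of dom g and mapping bounded subsets of dom g to bounded sets). Let (x^k) be generated by the forward-backward method with Linesearch 1 (x⁰ ∈ dom g, σ > 0, θ ∈ (0,1), δ ∈ (0,1/2), α_k the largest α ∈ {σθⁿ : n ≥ 0} with α‖∇f(J(x^k,α)) − ∇f(x^k)‖ ≤ δ‖J(x^k,α) − x^k‖, x^{k+1} = J(x^k, α_k)). If f+g has no minimizer in H, then ‖x^k‖ → +∞ and (f+g)(x^k) → inf_{x∈H} (f+g)(x) as k → ∞. -/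

import Mathlib

open Set Filter Topology Bornology RealInnerProductSpace

noncomputable section

variable {H : Type*} [NormedAddCommGroup H] [InnerProductSpace ℝ H] [CompleteSpace H]

/-- The effective domain of an extended-real-valued function. -/
def edom (h : H → EReal) : Set H := {x | h x < ⊤}

/-- `h` is a proper, lower semicontinuous, convex extended-real-valued function. -/
def ProperLscConvex (h : H → EReal) : Prop :=
  (∃ x, h x < ⊤) ∧ (∀ x, ⊥ < h x) ∧ LowerSemicontinuous h ∧
    ∀ x y : H, ∀ a b : ℝ, 0 ≤ a → 0 ≤ b → a + b = 1 →
      h (a • x + b • y) ≤ (a : EReal) * h x + (b : EReal) * h y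

/-- `p` is the proximal point `prox_{αg}(z)`, i.e. a minimizer of
`y ↦ g(y) + (1/(2α))‖y - z‖²` (such a minimizer is automatically unique). -/
def IsProxPt (g : H → EReal) (α : ℝ) (z p : H) : Prop :=
  ∀ y : H, g p + (((1 / (2 * α)) * ‖p - z‖ ^ 2 : ℝ) : EReal)
    ≤ g y + (((1 / (2 * α)) * ‖y - z‖ ^ 2 : ℝ) : EReal)

/-- `f` is Fréchet differentiable, with gradient `f'`, on an open set containing `s`
(in particular `f` is finite there). -/
def GradOnOpenSupset (f : H → EReal) (f' : H → H) (s : Set H) : Prop :=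
  ∃ U : Set H, IsOpen U ∧ s ⊆ U ∧
    ∀ x ∈ U, f x ≠ ⊤ ∧ HasGradientAt (fun y => (f y).toReal) (f' x) x

/-- Second half of Assumption A2: `f'` is uniformly continuous on bounded subsets of
`dom g` and maps bounded subsets of `dom g` to bounded sets. -/
def UCBddOnBounded (g : H → EReal) (f' : H → H) : Prop :=
  ∀ A : Set H, A ⊆ edom g → IsBounded A →
    UniformContinuousOn f' A ∧ IsBounded (f' '' A)

/-- The Linesearch-1 acceptance inequality at the point `x` with stepsize `α`. -/
def LS1 (f' : H → H) (J : H → ℝ → H) (δ : ℝ) (x : H) (α : ℝ) : Prop :=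
  α * ‖f' (J x α) - f' x‖ ≤ δ * ‖J x α - x‖

/-- `α` is the output of Linesearch 1 at `x`: the largest element of
`{σ, σθ, σθ², …}` satisfying the acceptance inequality. -/
def LS1Step (f' : H → H) (J : H → ℝ → H) (δ σ θ : ℝ) (x : H) (α : ℝ) : Prop :=
  ∃ n : ℕ, α = σ * θ ^ n ∧ LS1 f' J δ x α ∧
    ∀ m : ℕ, m < n → ¬ LS1 f' J δ x (σ * θ ^ m)

/-- The set of minimizers `S⁎` of `f + g` over `H`. -/
def argminSet (f g : H → EReal) : Set H := {x | ∀ y, f x + g x ≤ f y + g y}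

/-- The Linesearch-2 acceptance inequality at `x` (with `Jx = prox_g(x - ∇f(x))`)
with stepsize `β`. -/
def LS2Ineq (f g : H → EReal) (f' : H → H) (x Jx : H) (β : ℝ) : Prop :=
  f (x - β • (x - Jx)) + g (x - β • (x - Jx)) ≤
    f x + g x - (β : EReal) * (g x - g Jx)
      - ((β * ⟪f' x, x - Jx⟫ : ℝ) : EReal) + (((β / 2) * ‖x - Jx‖ ^ 2 : ℝ) : EReal)

/-- `v` belongs to the convex subdifferential `∂h(y)`. -/
def InSubdiff (h : H → EReal) (y v : H) : Prop :=
  ∀ z : H, ((⟪v, z - y⟫ : ℝ) : EReal) ≤ h z - h y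

/-- `h` is strongly convex with modulus `μ`. -/
def StrongConvexWith (h : H → EReal) (μ : ℝ) : Prop :=
  ∀ x y v : H, InSubdiff h y v →
    h y + ((⟪v, x - y⟫ : ℝ) : EReal) + (((μ / 2) * ‖x - y‖ ^ 2 : ℝ) : EReal) ≤ h x

/-!
Comparing the proximal inequality for `g` with the gradient inequality for `f` shows that a step
which passes the linesearch satisfies
`‖x⁺ - y‖² + (1 - 2δ)‖x⁺ - x‖² ≤ ‖x - y‖² + 2α((f + g)(y) - (f + g)(x⁺))` for every `y ∈ dom g`.
With `y = x` the values `(f + g)(xᵏ)` decrease. Suppose they stay above `(f + g)(y) + ε`. Then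
`‖xᵏ - y‖` decreases, `αₖ → 0`, the displacements `dₖ = ‖xᵏ⁺¹ - xᵏ‖` tend to `0`, and
`αₖ = O(dₖ)`. But `αₖ → 0` means that the stepsize `αₖ / θ` is eventually rejected, and uniform
continuity of `∇f` then gives `dₖ = o(αₖ)`, a contradiction; so the values tend to the infimum.
If `‖xᵏ‖` did not tend to infinity, then every sublevel set of `f + g` above the infimum would meet
a fixed ball, and in a Hilbert space nested closed convex sets with this property have a common
point: a minimizer.
-/

theorem add_fderiv_sub_le_of_convexOn {E : Type*} [NormedAddCommGroup E] [NormedSpace ℝ E]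
    {s : Set E} {φ : E → ℝ} {φ' : E →L[ℝ] ℝ} {x y : E} (hφ : ConvexOn ℝ s φ) (hx : x ∈ s)
    (hy : y ∈ s) (hd : HasFDerivAt φ φ' x) : φ x + φ' (y - x) ≤ φ y := by
  have hline : ConvexOn ℝ (AffineMap.lineMap x y ⁻¹' s) (φ ∘ AffineMap.lineMap (k := ℝ) x y) :=
    hφ.comp_affineMap _
  have hderiv : HasDerivAt (φ ∘ AffineMap.lineMap (k := ℝ) x y) (φ' (y - x)) 0 :=
    HasFDerivAt.comp_hasDerivAt _ (by simpa using hd) AffineMap.hasDerivAt_lineMap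
  have hslope := hline.le_slope_of_hasDerivAt (y := 1) (by simpa using hx) (by simpa using hy)
    one_pos hderiv
  simp only [slope_def_field, Function.comp_apply, AffineMap.lineMap_apply_one,
    AffineMap.lineMap_apply_zero, sub_zero, div_one] at hslope
  linarith

theorem mem_edom_iff_ne_top {X : Type*} {h : X → EReal} {x : X} : x ∈ edom h ↔ h x ≠ ⊤ := by
  rw [edom, mem_ofPred_eq, lt_top_iff_ne_top]

namespace ProperLscConvex

variable {E : Type*} [NormedAddCommGroup E] [InnerProductSpace ℝ E] {f g h : E → EReal} {x : E}

theorem coe_toReal (hh : ProperLscConvex h) (hx : x ∈ edom h) : ((h x).toReal : EReal) = h x :=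
  EReal.coe_toReal hx.ne (hh.2.1 x).ne'

theorem convexOn_toReal (hh : ProperLscConvex h) : ConvexOn ℝ (edom h) fun x => (h x).toReal := by
  have hcomb : ∀ {x}, x ∈ edom h → ∀ {y}, y ∈ edom h → ∀ {a b : ℝ}, 0 ≤ a → 0 ≤ b → a + b = 1 →
      h (a • x + b • y) ≤ (a * (h x).toReal + b * (h y).toReal : ℝ) := by
    intro x hx y hy a b ha hb hab
    have hle := hh.2.2.2 x y a b ha hb hab
    rwa [← hh.coe_toReal hx, ← hh.coe_toReal hy, ← EReal.coe_mul, ← EReal.coe_mul,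
      ← EReal.coe_add] at hle
  have hconvex : Convex ℝ (edom h) := fun x hx y hy a b ha hb hab =>
    (hcomb hx hy ha hb hab).trans_lt (EReal.coe_lt_top _)
  refine ⟨hconvex, fun x hx y hy a b ha hb hab => ?_⟩
  rw [← EReal.coe_le_coe_iff, hh.coe_toReal (hconvex hx hy ha hb hab)]
  exact hcomb hx hy ha hb hab

theorem quasiconvexOn_univ (hh : ProperLscConvex h) : QuasiconvexOn ℝ univ h := by
  rintro r x ⟨-, hx⟩ y ⟨-, hy⟩ a b ha hb hab
  have ha' : (0 : EReal) ≤ a := EReal.coe_nonneg.2 ha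
  have hb' : (0 : EReal) ≤ b := EReal.coe_nonneg.2 hb
  refine ⟨mem_univ _, ?_⟩
  calc h (a • x + b • y) ≤ a * h x + b * h y := hh.2.2.2 x y a b ha hb hab
    _ ≤ a * r + b * r := by gcongr
    _ = r := by
      rw [← EReal.right_distrib_of_nonneg ha' hb', ← EReal.coe_add, hab, EReal.coe_one, one_mul]

theorem mem_edom_add (hf : ProperLscConvex f) (hfg : edom g ⊆ edom f) :
    x ∈ edom (f + g) ↔ x ∈ edom g := by
  refine ⟨fun hx => mem_edom_iff_ne_top.2 fun hgx => mem_edom_iff_ne_top.1 hx ?_,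
    fun hx => EReal.add_lt_top (hfg hx).ne hx.ne⟩
  rw [Pi.add_apply, hgx, EReal.add_top_of_ne_bot (hf.2.1 x).ne']

theorem add (hf : ProperLscConvex f) (hg : ProperLscConvex g) (hfg : edom g ⊆ edom f) :
    ProperLscConvex (f + g) := by
  refine ⟨hg.1.imp fun x hx => (mem_edom_add hf hfg).2 hx,
    fun x => EReal.bot_lt_add_iff.2 ⟨hf.2.1 x, hg.2.1 x⟩,
    hf.2.2.1.add' hg.2.2.1 fun x =>
      EReal.continuousAt_add (.inr (hg.2.1 x).ne') (.inl (hf.2.1 x).ne'),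
    fun x y a b ha hb hab => ?_⟩
  have hdistrib : ∀ {c : ℝ}, 0 ≤ c → ∀ z, (c : EReal) * (f + g) z = c * f z + c * g z :=
    fun hc z => EReal.left_distrib_of_nonneg_of_ne_top (EReal.coe_nonneg.2 hc)
      (EReal.coe_ne_top _) _ _
  calc (f + g) (a • x + b • y)
      ≤ (a * f x + b * f y) + (a * g x + b * g y) :=
        add_le_add (hf.2.2.2 x y a b ha hb hab) (hg.2.2.2 x y a b ha hb hab)
    _ = a * (f + g) x + b * (f + g) y := by
        rw [hdistrib ha, hdistrib hb, add_add_add_comm]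

theorem toReal_add (hf : ProperLscConvex f) (hg : ProperLscConvex g) (hfx : x ∈ edom f)
    (hgx : x ∈ edom g) : ((f + g) x).toReal = (f x).toReal + (g x).toReal :=
  EReal.toReal_add hfx.ne (hf.2.1 x).ne' hgx.ne (hg.2.1 x).ne'

end ProperLscConvex

namespace GradOnOpenSupset

variable {f : H → EReal} {f' : H → H} {s : Set H} {x y : H}

theorem subset_edom (hd : GradOnOpenSupset f f' s) : s ⊆ edom f := by
  obtain ⟨U, -, hsU, hU⟩ := hd
  exact fun x hx => mem_edom_iff_ne_top.2 (hU x (hsU hx)).1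

theorem add_inner_le (hd : GradOnOpenSupset f f' s) (hf : ProperLscConvex f) (hx : x ∈ s)
    (hy : y ∈ edom f) : (f x).toReal + ⟪f' x, y - x⟫ ≤ (f y).toReal := by
  have hxf := hd.subset_edom hx
  obtain ⟨U, -, hsU, hU⟩ := hd
  simpa using add_fderiv_sub_le_of_convexOn hf.convexOn_toReal hxf hy (hU x (hsU hx)).2.hasFDerivAt

end GradOnOpenSupset

namespace IsProxPt

variable {E : Type*} [NormedAddCommGroup E] [InnerProductSpace ℝ E] {g : E → EReal}
  {α β : ℝ} {x u y z p q : E}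

theorem mem_edom (hp : IsProxPt g α z p) (hg : ProperLscConvex g) : p ∈ edom g := by
  obtain ⟨y, hy⟩ := hg.1
  refine mem_edom_iff_ne_top.2 fun htop => ?_
  have hle := hp y
  rw [htop, EReal.top_add_coe, top_le_iff, ← hg.coe_toReal hy, ← EReal.coe_add] at hle
  exact EReal.coe_ne_top _ hle

theorem toReal_add_le (hp : IsProxPt g α z p) (hg : ProperLscConvex g) (hy : y ∈ edom g) :
    (g p).toReal + 1 / (2 * α) * ‖p - z‖ ^ 2 ≤ (g y).toReal + 1 / (2 * α) * ‖y - z‖ ^ 2 := by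
  have hle := hp y
  rwa [← hg.coe_toReal (hp.mem_edom hg), ← hg.coe_toReal hy, ← EReal.coe_add, ← EReal.coe_add,
    EReal.coe_le_coe_iff] at hle

theorem inner_sub_le_add (hp : IsProxPt g α z p) (hg : ProperLscConvex g) (hα : 0 < α)
    (hy : y ∈ edom g) {t : ℝ} (ht : t ∈ Ioo (0 : ℝ) 1) :
    ⟪z - p, y - p⟫ ≤ α * ((g y).toReal - (g p).toReal) + t * (‖y - p‖ ^ 2 / 2) := by
  have hpg := hp.mem_edom hg
  have ht' : 0 ≤ 1 - t := sub_nonneg.2 ht.2.le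
  have hconv := hg.convexOn_toReal.2 hpg hy ht' ht.1.le (sub_add_cancel _ _)
  have hmin := hp.toReal_add_le hg
    (hg.convexOn_toReal.1 hpg hy ht' ht.1.le (sub_add_cancel _ _))
  simp only [smul_eq_mul] at hconv
  have hnorm : ‖(1 - t) • p + t • y - z‖ ^ 2
      = t ^ 2 * ‖y - p‖ ^ 2 - 2 * t * ⟪z - p, y - p⟫ + ‖p - z‖ ^ 2 := by
    rw [show (1 - t) • p + t • y - z = t • (y - p) - (z - p) by module, norm_sub_sq_real,
      norm_smul, real_inner_smul_left, real_inner_comm, mul_pow, Real.norm_of_nonneg ht.1.le,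
      norm_sub_rev z p]
    ring
  have hcombined : t * ((g p).toReal - (g y).toReal)
      ≤ (t ^ 2 * ‖y - p‖ ^ 2 - 2 * t * ⟪z - p, y - p⟫) / (2 * α) := by
    rw [hnorm] at hmin
    rw [div_eq_inv_mul, ← one_div]
    linarith
  rw [le_div_iff₀ (by positivity)] at hcombined
  refine le_of_mul_le_mul_left ?_ ht.1
  linarith

theorem inner_sub_le (hp : IsProxPt g α z p) (hg : ProperLscConvex g) (hα : 0 < α)
    (hy : y ∈ edom g) : ⟪z - p, y - p⟫ ≤ α * ((g y).toReal - (g p).toReal) := by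
  have hlim : Tendsto (fun t : ℝ => α * ((g y).toReal - (g p).toReal) + t * (‖y - p‖ ^ 2 / 2))
      (𝓝[>] 0) (𝓝 (α * ((g y).toReal - (g p).toReal))) :=
    tendsto_nhdsWithin_of_tendsto_nhds <| Continuous.tendsto' (by fun_prop) _ _ (by simp)
  refine ge_of_tendsto hlim ?_
  filter_upwards [Ioo_mem_nhdsGT one_pos] with t ht using hp.inner_sub_le_add hg hα hy ht

theorem mul_sub_mul_norm_nonpos (hp : IsProxPt g α (x - α • u) p)
    (hq : IsProxPt g β (x - β • u) q) (hg : ProperLscConvex g) (hα : 0 < α) (hβ : 0 < β) :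
    (β * ‖p - x‖ - α * ‖q - x‖) * (‖p - x‖ - ‖q - x‖) ≤ 0 := by
  have hpq := hp.inner_sub_le hg hα (hq.mem_edom hg)
  have hqp := hq.inner_sub_le hg hβ (hp.mem_edom hg)
  rw [show x - α • u - p = -(p - x) - α • u by module,
    show q - p = (q - x) - (p - x) by module] at hpq
  rw [show x - β • u - q = -(q - x) - β • u by module,
    show p - q = (p - x) - (q - x) by module] at hqp
  generalize p - x = v at *
  generalize q - x = w at *
  simp only [inner_sub_left, inner_sub_right, inner_neg_left, real_inner_smul_left,
    real_inner_self_eq_norm_sq, real_inner_comm v w] at hpq hqp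
  have hcauchy := mul_le_mul_of_nonneg_left (real_inner_le_norm v w) (add_pos hα hβ).le
  linarith [mul_le_mul_of_nonneg_left hpq hβ.le, mul_le_mul_of_nonneg_left hqp hα.le,
    real_inner_comm v w]

theorem norm_sub_le_norm_sub (hp : IsProxPt g α (x - α • u) p)
    (hq : IsProxPt g β (x - β • u) q) (hg : ProperLscConvex g) (hα : 0 < α) (hαβ : α ≤ β) :
    ‖p - x‖ ≤ ‖q - x‖ := by
  have hmul := hp.mul_sub_mul_norm_nonpos hq hg hα (hα.trans_le hαβ)
  by_contra! hlt
  have hpos : 0 < β * ‖p - x‖ - α * ‖q - x‖ := by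
    linarith [mul_lt_mul_of_pos_left hlt hα, mul_le_mul_of_nonneg_right hαβ (norm_nonneg (p - x))]
  exact hmul.not_gt (mul_pos hpos (sub_pos.2 hlt))

theorem mul_norm_sub_le_mul_norm_sub (hp : IsProxPt g α (x - α • u) p)
    (hq : IsProxPt g β (x - β • u) q) (hg : ProperLscConvex g) (hα : 0 < α) (hαβ : α ≤ β) :
    α * ‖q - x‖ ≤ β * ‖p - x‖ := by
  have hmul := hp.mul_sub_mul_norm_nonpos hq hg hα (hα.trans_le hαβ)
  by_contra! hlt
  have hle : ‖q - x‖ ≤ ‖p - x‖ := sub_nonneg.1 (nonneg_of_mul_nonpos_right hmul (sub_neg.2 hlt))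
  exact hlt.not_ge (mul_le_mul hαβ hle (norm_nonneg _) (hα.le.trans hαβ))

end IsProxPt

theorem norm_sub_sq_add_le_of_isProxPt {f g : H → EReal} {f' : H → H} {α δ : ℝ} {x y p : H}
    (hf : ProperLscConvex f) (hg : ProperLscConvex g) (hd : GradOnOpenSupset f f' (edom g))
    (hα : 0 < α) (hx : x ∈ edom g) (hy : y ∈ edom g) (hp : IsProxPt g α (x - α • f' x) p)
    (hls : α * ‖f' p - f' x‖ ≤ δ * ‖p - x‖) :
    ‖p - y‖ ^ 2 + (1 - 2 * δ) * ‖p - x‖ ^ 2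
      ≤ ‖x - y‖ ^ 2 + 2 * α * (((f + g) y).toReal - ((f + g) p).toReal) := by
  have hpg := hp.mem_edom hg
  have hdom := hd.subset_edom
  have hprox := hp.inner_sub_le hg hα hy
  have hgrad_x := mul_le_mul_of_nonneg_left (hd.add_inner_le hf hx (hdom hy)) hα.le
  have hgrad_p := mul_le_mul_of_nonneg_left (hd.add_inner_le hf hpg (hdom hx)) hα.le
  have hgrad_diff : α * ⟪f' p - f' x, p - x⟫ ≤ δ * ‖p - x‖ ^ 2 :=
    calc α * ⟪f' p - f' x, p - x⟫ ≤ α * (‖f' p - f' x‖ * ‖p - x‖) := by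
          gcongr
          exact real_inner_le_norm _ _
      _ = α * ‖f' p - f' x‖ * ‖p - x‖ := by ring
      _ ≤ δ * ‖p - x‖ * ‖p - x‖ := by gcongr
      _ = δ * ‖p - x‖ ^ 2 := by ring
  rw [hf.toReal_add hg (hdom hy) hy, hf.toReal_add hg (hdom hpg) hpg,
    show x - y = (p - y) - (p - x) by module, norm_sub_sq_real (p - y)]
  rw [show x - α • f' x - p = -(p - x) - α • f' x by module, ← neg_sub p y] at hprox
  rw [show y - x = (p - x) - (p - y) by module] at hgrad_x
  rw [← neg_sub p x] at hgrad_p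
  generalize p - x = v at *
  generalize p - y = w at *
  simp only [inner_sub_left, inner_sub_right, inner_neg_left, inner_neg_right,
    real_inner_smul_left] at hprox hgrad_x hgrad_p hgrad_diff
  linarith [real_inner_comm v w]

theorem exists_forall_norm_sq_le_inner {C : Set H} (hne : C.Nonempty) (hclosed : IsClosed C)
    (hconv : Convex ℝ C) : ∃ v ∈ C, ∀ w ∈ C, ‖v‖ ^ 2 ≤ ⟪v, w⟫ := by
  obtain ⟨v, hv, hmin⟩ := exists_norm_eq_iInf_of_complete_convex hne hclosed.isComplete hconv 0
  refine ⟨v, hv, fun w hw => ?_⟩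
  have hle := (norm_eq_iInf_iff_real_inner_le_zero hconv hv).1 hmin w hw
  simp only [zero_sub, inner_neg_left, inner_sub_right, real_inner_self_eq_norm_sq] at hle
  linarith

theorem cauchySeq_of_norm_sub_sq_le {E : Type*} [SeminormedAddCommGroup E] {v : ℕ → E} {r : ℕ → ℝ}
    (hr : BddAbove (range r)) (hv : ∀ m n, m ≤ n → ‖v n - v m‖ ^ 2 ≤ r n - r m) : CauchySeq v := by
  have hmono : Monotone r := fun m n hmn => sub_nonneg.1 ((sq_nonneg _).trans (hv m n hmn))
  have hcauchy := (tendsto_atTop_ciSup hmono hr).cauchySeq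
  rw [Metric.cauchySeq_iff'] at hcauchy ⊢
  intro ε hε
  obtain ⟨N, hN⟩ := hcauchy (ε ^ 2) (by positivity)
  refine ⟨N, fun n hn => ?_⟩
  rw [dist_eq_norm]
  exact lt_of_pow_lt_pow_left₀ 2 hε.le
    ((hv N n hn).trans_lt ((le_abs_self _).trans_lt (hN n hn)))

theorem nonempty_iInter_of_antitone_convex {C : ℕ → Set H} (hanti : Antitone C)
    (hclosed : ∀ n, IsClosed (C n)) (hconv : ∀ n, Convex ℝ (C n)) {R : ℝ}
    (hR : ∀ n, ∃ z ∈ C n, ‖z‖ ≤ R) : (⋂ n, C n).Nonempty := by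
  choose v hvC hv using fun n =>
    exists_forall_norm_sq_le_inner ((hR n).imp fun _ hz => hz.1) (hclosed n) (hconv n)
  have hgap : ∀ m n, m ≤ n → ‖v n - v m‖ ^ 2 ≤ ‖v n‖ ^ 2 - ‖v m‖ ^ 2 := fun m n hmn => by
    rw [norm_sub_sq_real, real_inner_comm]
    linarith [hv m (v n) (hanti hmn (hvC n))]
  have hbound : ∀ n, ‖v n‖ ^ 2 ≤ R ^ 2 := fun n => by
    obtain ⟨z, hz, hzR⟩ := hR n
    have hzR_sq : ‖z‖ ^ 2 ≤ R ^ 2 := by gcongr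
    linarith [(hv n z hz).trans (real_inner_le_norm (v n) z), two_mul_le_add_sq ‖v n‖ ‖z‖]
  obtain ⟨z, hz⟩ := cauchySeq_tendsto_of_complete
    (cauchySeq_of_norm_sub_sq_le ⟨R ^ 2, forall_mem_range.2 hbound⟩ hgap)
  refine ⟨z, mem_iInter.2 fun n => (hclosed n).mem_of_tendsto hz ?_⟩
  filter_upwards [eventually_ge_atTop n] with m hm using hanti hm (hvC m)

theorem tendsto_norm_atTop_of_tendsto_iInf {φ : H → EReal} (hlsc : LowerSemicontinuous φ)
    (hquasi : QuasiconvexOn ℝ univ φ) (hmin : ∀ z, ∃ y, φ y < φ z) {x : ℕ → H}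
    (hx : Tendsto (fun k => φ (x k)) atTop (𝓝 (⨅ y, φ y))) :
    Tendsto (fun k => ‖x k‖) atTop atTop := by
  by_contra hnot
  simp only [tendsto_atTop, not_forall, not_eventually, not_le] at hnot
  obtain ⟨R, hR⟩ := hnot
  obtain ⟨y, hy⟩ := hmin 0
  obtain ⟨c, hc_anti, hc_mem, hc⟩ := exists_seq_strictAnti_tendsto' ((iInf_le φ y).trans_lt hy)
  obtain ⟨z, hz⟩ := nonempty_iInter_of_antitone_convex (C := fun n => {y | φ y ≤ c n})
    (fun m n hmn y hy => hy.trans (hc_anti.antitone hmn))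
    (fun n => hlsc.isClosed_preimage (c n)) (fun n => by simpa using hquasi (c n)) (R := R)
    fun n => by
      obtain ⟨k, hkR, hk⟩ := (hR.and_eventually (hx.eventually_lt_const (hc_mem n).1)).exists
      exact ⟨x k, hk.le, hkR.le⟩
  have hz_le : φ z ≤ ⨅ y, φ y := ge_of_tendsto' hc (mem_iInter.1 hz)
  obtain ⟨w, hw⟩ := hmin z
  exact hw.not_ge (hz_le.trans (iInf_le φ w))

/-- Quantitative Fejér monotonicity of `x` with respect to the point `y`: each step decreases the
squared distance to `y` by at least a nonnegative gain `b k` plus a fixed positive multiple `c` of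
the squared length of the step. -/
structure IsFejerDescent {E : Type*} [SeminormedAddCommGroup E] (x : ℕ → E) (y : E) (b : ℕ → ℝ)
    (c : ℝ) : Prop where
  gain_nonneg : ∀ k, 0 ≤ b k
  coeff_pos : 0 < c
  descent : ∀ k, b k + c * ‖x (k + 1) - x k‖ ^ 2 ≤ ‖x k - y‖ ^ 2 - ‖x (k + 1) - y‖ ^ 2

namespace IsFejerDescent

variable {E : Type*} [SeminormedAddCommGroup E] {x : ℕ → E} {y : E} {b : ℕ → ℝ} {c : ℝ}

theorem gain_le (h : IsFejerDescent x y b c) (k : ℕ) :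
    b k ≤ ‖x k - y‖ ^ 2 - ‖x (k + 1) - y‖ ^ 2 :=
  (le_add_of_nonneg_right (mul_nonneg h.coeff_pos.le (sq_nonneg _))).trans (h.descent k)

theorem antitone_norm_sub_sq (h : IsFejerDescent x y b c) : Antitone fun k => ‖x k - y‖ ^ 2 :=
  antitone_nat_of_succ_le fun k => sub_nonneg.1 ((h.gain_nonneg k).trans (h.gain_le k))

theorem norm_sub_le (h : IsFejerDescent x y b c) (k : ℕ) : ‖x k - y‖ ≤ ‖x 0 - y‖ :=
  le_of_sq_le_sq (h.antitone_norm_sub_sq k.zero_le) (norm_nonneg _)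

theorem isBounded_range (h : IsFejerDescent x y b c) : IsBounded (range x) :=
  Metric.isBounded_closedBall.subset <| range_subset_iff.2 fun k =>
    mem_closedBall_iff_norm.2 (h.norm_sub_le k)

theorem tendsto_norm_sub_sq_sub (h : IsFejerDescent x y b c) :
    Tendsto (fun k => ‖x k - y‖ ^ 2 - ‖x (k + 1) - y‖ ^ 2) atTop (𝓝 0) := by
  have hlim := tendsto_atTop_ciInf h.antitone_norm_sub_sq
    ⟨0, forall_mem_range.2 fun k => sq_nonneg _⟩
  simpa using hlim.sub (hlim.comp (tendsto_add_atTop_nat 1))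

theorem tendsto_gain (h : IsFejerDescent x y b c) : Tendsto b atTop (𝓝 0) :=
  squeeze_zero h.gain_nonneg h.gain_le h.tendsto_norm_sub_sq_sub

theorem tendsto_step (h : IsFejerDescent x y b c) :
    Tendsto (fun k => x (k + 1) - x k) atTop (𝓝 0) := by
  have hsq : Tendsto (fun k => c * ‖x (k + 1) - x k‖ ^ 2) atTop (𝓝 0) :=
    squeeze_zero (fun k => mul_nonneg h.coeff_pos.le (sq_nonneg _))
      (fun k => (le_add_of_nonneg_left (h.gain_nonneg k)).trans (h.descent k))
      h.tendsto_norm_sub_sq_sub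
  rw [tendsto_zero_iff_norm_tendsto_zero]
  simpa [h.coeff_pos.ne'] using (hsq.const_mul c⁻¹).sqrt

theorem gain_isBigO_step (h : IsFejerDescent x y b c) :
    b =O[atTop] fun k => x (k + 1) - x k := by
  refine Asymptotics.IsBigO.of_bound (2 * ‖x 0 - y‖) (.of_forall fun k => ?_)
  have hstep : ‖x k - y‖ - ‖x (k + 1) - y‖ ≤ ‖x (k + 1) - x k‖ := by
    simpa [norm_sub_rev] using norm_sub_norm_le (x k - y) (x (k + 1) - y)
  calc ‖b k‖ = b k := Real.norm_of_nonneg (h.gain_nonneg k)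
    _ ≤ ‖x k - y‖ ^ 2 - ‖x (k + 1) - y‖ ^ 2 := h.gain_le k
    _ = (‖x k - y‖ - ‖x (k + 1) - y‖) * (‖x k - y‖ + ‖x (k + 1) - y‖) := by ring
    _ ≤ ‖x (k + 1) - x k‖ * (‖x 0 - y‖ + ‖x 0 - y‖) := by
        gcongr
        exacts [h.norm_sub_le k, h.norm_sub_le (k + 1)]
    _ = 2 * ‖x 0 - y‖ * ‖x (k + 1) - x k‖ := by ring

end IsFejerDescent

theorem UCBddOnBounded.tendsto_sub {E ι : Type*} [NormedAddCommGroup E] {g : E → EReal}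
    {f' : E → E} (hf' : UCBddOnBounded g f') {l : Filter ι} {u v : ι → E}
    (hu : ∀ i, u i ∈ edom g) (hv : ∀ i, v i ∈ edom g) (hub : IsBounded (range u))
    (hvb : IsBounded (range v)) (huv : Tendsto (fun i => u i - v i) l (𝓝 0)) :
    Tendsto (fun i => f' (u i) - f' (v i)) l (𝓝 0) := by
  have huc : UniformContinuousOn f' (range u ∪ range v) :=
    (hf' _ (union_subset (range_subset_iff.2 hu) (range_subset_iff.2 hv)) (hub.union hvb)).1
  rw [tendsto_zero_iff_norm_tendsto_zero] at huv ⊢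
  simp only [← dist_eq_norm, ← tendsto_uniformity_iff_dist_tendsto_zero (f := fun _ => (_, _))]
    at huv ⊢
  exact Tendsto.comp huc <| tendsto_inf.2 ⟨huv, tendsto_principal.2 <| .of_forall fun i =>
    ⟨.inl (mem_range_self i), .inr (mem_range_self i)⟩⟩

theorem LS1Step.not_ls1_div {E : Type*} [NormedAddCommGroup E] {f' : E → E} {J : E → ℝ → E}
    {δ σ θ α : ℝ} {x : E} (h : LS1Step f' J δ σ θ x α) (hθ : θ ≠ 0) (hα : α ≠ σ) :
    ¬ LS1 f' J δ x (α / θ) := by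
  obtain ⟨n, rfl, -, hrejected⟩ := h
  obtain - | m := n
  · simp at hα
  · rw [show σ * θ ^ (m + 1) / θ = σ * θ ^ m by
      rw [pow_succ, ← mul_assoc, mul_div_cancel_right₀ _ hθ]]
    exact hrejected m m.lt_succ_self

/-- A run of the forward-backward method with Linesearch 1: `J z α` is the forward-backward point
`prox_{αg}(z - α f'(z))`, and the iterates `x` use the stepsizes `a` returned by the linesearch. -/
structure IsLinesearchRun {E : Type*} [NormedAddCommGroup E] [InnerProductSpace ℝ E]
    (g : E → EReal) (f' : E → E) (J : E → ℝ → E) (σ θ δ : ℝ) (x : ℕ → E) (a : ℕ → ℝ) : Prop where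
  isProxPt : ∀ z α, 0 < α → IsProxPt g α (z - α • f' z) (J z α)
  sigma_pos : 0 < σ
  theta_mem : θ ∈ Ioo (0 : ℝ) 1
  delta_mem : δ ∈ Ioo (0 : ℝ) (1 / 2)
  zero_mem : x 0 ∈ edom g
  linesearch : ∀ k, LS1Step f' J δ σ θ (x k) (a k)
  iterate : ∀ k, x (k + 1) = J (x k) (a k)

namespace IsLinesearchRun

section Stepsizes

variable {E : Type*} [NormedAddCommGroup E] [InnerProductSpace ℝ E] {g : E → EReal} {f' : E → E}
  {J : E → ℝ → E} {σ θ δ : ℝ} {x : ℕ → E} {a : ℕ → ℝ}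

theorem stepsize_pos (h : IsLinesearchRun g f' J σ θ δ x a) (k : ℕ) : 0 < a k := by
  obtain ⟨n, hn, -⟩ := h.linesearch k
  exact hn ▸ mul_pos h.sigma_pos (pow_pos h.theta_mem.1 n)

theorem isProxPt_succ (h : IsLinesearchRun g f' J σ θ δ x a) (k : ℕ) :
    IsProxPt g (a k) (x k - a k • f' (x k)) (x (k + 1)) :=
  h.iterate k ▸ h.isProxPt _ _ (h.stepsize_pos k)

theorem mem_edom (h : IsLinesearchRun g f' J σ θ δ x a) (hg : ProperLscConvex g) :
    ∀ k, x k ∈ edom g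
  | 0 => h.zero_mem
  | k + 1 => (h.isProxPt_succ k).mem_edom hg

theorem accepted (h : IsLinesearchRun g f' J σ θ δ x a) (k : ℕ) :
    a k * ‖f' (x (k + 1)) - f' (x k)‖ ≤ δ * ‖x (k + 1) - x k‖ := by
  obtain ⟨n, -, hls, -⟩ := h.linesearch k
  rwa [LS1, ← h.iterate] at hls

theorem isProxPt_div_theta (h : IsLinesearchRun g f' J σ θ δ x a) (k : ℕ) :
    IsProxPt g (a k / θ) (x k - (a k / θ) • f' (x k)) (J (x k) (a k / θ)) :=
  h.isProxPt _ _ (div_pos (h.stepsize_pos k) h.theta_mem.1)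

theorem stepsize_le_div_theta (h : IsLinesearchRun g f' J σ θ δ x a) (k : ℕ) :
    a k ≤ a k / θ :=
  le_div_self (h.stepsize_pos k).le h.theta_mem.1 h.theta_mem.2.le

theorem theta_mul_norm_sub_le (h : IsLinesearchRun g f' J σ θ δ x a) (hg : ProperLscConvex g)
    (k : ℕ) : θ * ‖J (x k) (a k / θ) - x k‖ ≤ ‖x (k + 1) - x k‖ := by
  have hmul := (h.isProxPt_succ k).mul_norm_sub_le_mul_norm_sub (h.isProxPt_div_theta k) hg
    (h.stepsize_pos k) (h.stepsize_le_div_theta k)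
  rw [div_mul_eq_mul_div, le_div_iff₀ h.theta_mem.1] at hmul
  refine le_of_mul_le_mul_left ?_ (h.stepsize_pos k)
  linarith

theorem tendsto_sub_of_tendsto_step (h : IsLinesearchRun g f' J σ θ δ x a)
    (hg : ProperLscConvex g) (hstep : Tendsto (fun k => x (k + 1) - x k) atTop (𝓝 0)) :
    Tendsto (fun k => J (x k) (a k / θ) - x k) atTop (𝓝 0) := by
  refine squeeze_zero_norm (fun k => (le_div_iff₀' h.theta_mem.1).2 (h.theta_mul_norm_sub_le hg k))
    ?_
  simpa using hstep.norm.div_const θ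

theorem delta_mul_norm_step_le (h : IsLinesearchRun g f' J σ θ δ x a) (hg : ProperLscConvex g)
    {k : ℕ} (hk : a k ≠ σ) :
    δ * ‖x (k + 1) - x k‖ ≤ a k / θ * ‖f' (J (x k) (a k / θ)) - f' (x k)‖ :=
  calc δ * ‖x (k + 1) - x k‖ ≤ δ * ‖J (x k) (a k / θ) - x k‖ :=
        mul_le_mul_of_nonneg_left ((h.isProxPt_succ k).norm_sub_le_norm_sub
          (h.isProxPt_div_theta k) hg (h.stepsize_pos k) (h.stepsize_le_div_theta k))
          h.delta_mem.1.le
    _ ≤ a k / θ * ‖f' (J (x k) (a k / θ)) - f' (x k)‖ :=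
        (not_le.1 ((h.linesearch k).not_ls1_div h.theta_mem.1.ne' hk)).le

theorem step_isLittleO_stepsize (h : IsLinesearchRun g f' J σ θ δ x a) (hg : ProperLscConvex g)
    (hf' : UCBddOnBounded g f') (hbdd : IsBounded (range x)) (ha : Tendsto a atTop (𝓝 0))
    (hstep : Tendsto (fun k => x (k + 1) - x k) atTop (𝓝 0)) :
    (fun k => x (k + 1) - x k) =o[atTop] a := by
  have hθ := h.theta_mem.1
  have hδ := h.delta_mem.1
  set p := fun k => J (x k) (a k / θ)
  have hpx : Tendsto (fun k => p k - x k) atTop (𝓝 0) := h.tendsto_sub_of_tendsto_step hg hstep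
  have hp_bdd : IsBounded (range p) := by
    refine (hbdd.add (Metric.isBounded_range_of_tendsto _ hpx)).subset
      (range_subset_iff.2 fun k => ?_)
    exact ⟨x k, mem_range_self k, p k - x k, mem_range_self k, add_sub_cancel _ _⟩
  have hgrad : Tendsto (fun k => f' (p k) - f' (x k)) atTop (𝓝 0) :=
    hf'.tendsto_sub (fun k => (h.isProxPt_div_theta k).mem_edom hg) (h.mem_edom hg) hp_bdd hbdd hpx
  have hprod : (fun k => a k * ‖f' (p k) - f' (x k)‖) =o[atTop] a := by
    simpa using (Asymptotics.isBigO_refl a atTop).mul_isLittleO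
      ((Asymptotics.isLittleO_one_iff ℝ).2 (tendsto_zero_iff_norm_tendsto_zero.1 hgrad))
  refine Asymptotics.IsBigO.trans_isLittleO ?_ hprod
  refine Asymptotics.IsBigO.of_bound (δ * θ)⁻¹ ?_
  filter_upwards [ha.eventually_lt_const h.sigma_pos] with k hk
  have hle := h.delta_mul_norm_step_le hg hk.ne
  rw [div_mul_eq_mul_div, le_div_iff₀ hθ] at hle
  rw [Real.norm_of_nonneg (mul_nonneg (h.stepsize_pos k).le (norm_nonneg _)),
    le_inv_mul_iff₀ (mul_pos hδ hθ)]
  linarith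

end Stepsizes

section Objective

variable {f g : H → EReal} {f' : H → H} {J : H → ℝ → H} {σ θ δ : ℝ} {x : ℕ → H} {a : ℕ → ℝ}
  {y : H}

theorem norm_sub_sq_add_le (h : IsLinesearchRun g f' J σ θ δ x a) (hf : ProperLscConvex f)
    (hg : ProperLscConvex g) (hd : GradOnOpenSupset f f' (edom g)) (hy : y ∈ edom g) (k : ℕ) :
    ‖x (k + 1) - y‖ ^ 2 + (1 - 2 * δ) * ‖x (k + 1) - x k‖ ^ 2
      ≤ ‖x k - y‖ ^ 2 + 2 * a k * (((f + g) y).toReal - ((f + g) (x (k + 1))).toReal) :=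
  norm_sub_sq_add_le_of_isProxPt hf hg hd (h.stepsize_pos k) (h.mem_edom hg k) hy
    (h.isProxPt_succ k) (h.accepted k)

theorem antitone_objective (h : IsLinesearchRun g f' J σ θ δ x a) (hf : ProperLscConvex f)
    (hg : ProperLscConvex g) (hd : GradOnOpenSupset f f' (edom g)) :
    Antitone fun k => (f + g) (x k) := by
  have hfg := hf.add hg hd.subset_edom
  have hmem : ∀ k, x k ∈ edom (f + g) := fun k =>
    (hf.mem_edom_add hd.subset_edom).2 (h.mem_edom hg k)
  refine antitone_nat_of_succ_le fun k => ?_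
  rw [← hfg.coe_toReal (hmem k), ← hfg.coe_toReal (hmem (k + 1)), EReal.coe_le_coe_iff]
  have hle := h.norm_sub_sq_add_le hf hg hd (h.mem_edom hg k) k
  rw [sub_self, norm_zero, zero_pow two_ne_zero, zero_add] at hle
  have hδ : 0 ≤ 1 - 2 * δ := by linarith [h.delta_mem.2]
  have hnonneg : 0 ≤ 2 * a k * (((f + g) (x k)).toReal - ((f + g) (x (k + 1))).toReal) :=
    le_trans (by positivity) hle
  exact sub_nonneg.1 (nonneg_of_mul_nonneg_right hnonneg (mul_pos two_pos (h.stepsize_pos k)))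

theorem isFejerDescent (h : IsLinesearchRun g f' J σ θ δ x a) (hf : ProperLscConvex f)
    (hg : ProperLscConvex g) (hd : GradOnOpenSupset f f' (edom g)) (hy : y ∈ edom g) {ε : ℝ}
    (hε : 0 ≤ ε) (hlevel : ∀ k, ((f + g) y).toReal + ε ≤ ((f + g) (x k)).toReal) :
    IsFejerDescent x y (fun k => 2 * ε * a k) (1 - 2 * δ) where
  gain_nonneg k := mul_nonneg (mul_nonneg zero_le_two hε) (h.stepsize_pos k).le
  coeff_pos := by linarith [h.delta_mem.2]
  descent k := by
    linarith [h.norm_sub_sq_add_le hf hg hd hy k,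
      mul_le_mul_of_nonneg_left (hlevel (k + 1)) (h.stepsize_pos k).le]

theorem exists_objective_lt (h : IsLinesearchRun g f' J σ θ δ x a) (hf : ProperLscConvex f)
    (hg : ProperLscConvex g) (hd : GradOnOpenSupset f f' (edom g)) (hf' : UCBddOnBounded g f')
    (hy : y ∈ edom g) {c : ℝ} (hc : ((f + g) y).toReal < c) :
    ∃ k, ((f + g) (x k)).toReal < c := by
  obtain ⟨ε, hε, rfl⟩ := exists_pos_add_of_lt' hc
  by_contra! hlevel
  have hfejer := h.isFejerDescent hf hg hd hy hε.le hlevel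
  have ha : Tendsto a atTop (𝓝 0) := by
    simpa only [inv_mul_cancel_left₀ (mul_pos two_pos hε).ne', mul_zero]
      using hfejer.tendsto_gain.const_mul (2 * ε)⁻¹
  have hstep : (fun k => x (k + 1) - x k) =o[atTop] a :=
    h.step_isLittleO_stepsize hg hf' hfejer.isBounded_range ha hfejer.tendsto_step
  have ha_step : a =O[atTop] fun k => x (k + 1) - x k :=
    (Asymptotics.isBigO_const_mul_left_iff (by positivity)).1 hfejer.gain_isBigO_step
  exact Asymptotics.isLittleO_irrefl (.of_forall fun k => (h.stepsize_pos k).ne')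
    (ha_step.trans_isLittleO hstep)

theorem iInf_objective_eq (h : IsLinesearchRun g f' J σ θ δ x a) (hf : ProperLscConvex f)
    (hg : ProperLscConvex g) (hd : GradOnOpenSupset f f' (edom g)) (hf' : UCBddOnBounded g f') :
    ⨅ k, (f + g) (x k) = ⨅ y, (f + g) y := by
  have hfg := hf.add hg hd.subset_edom
  have hmem : ∀ {z}, z ∈ edom (f + g) ↔ z ∈ edom g := hf.mem_edom_add hd.subset_edom
  refine le_antisymm (le_iInf fun y => EReal.le_of_forall_lt_iff_le.1 fun c hc => ?_)
    (le_iInf fun k => iInf_le _ (x k))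
  have hy : y ∈ edom (f + g) := hc.trans (EReal.coe_lt_top c)
  rw [← hfg.coe_toReal hy, EReal.coe_lt_coe_iff] at hc
  obtain ⟨k, hk⟩ := h.exists_objective_lt hf hg hd hf' (hmem.1 hy) hc
  refine iInf_le_of_le k ?_
  rw [← hfg.coe_toReal (hmem.2 (h.mem_edom hg k))]
  exact EReal.coe_le_coe_iff.2 hk.le

theorem tendsto_objective (h : IsLinesearchRun g f' J σ θ δ x a) (hf : ProperLscConvex f)
    (hg : ProperLscConvex g) (hd : GradOnOpenSupset f f' (edom g)) (hf' : UCBddOnBounded g f') :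
    Tendsto (fun k => (f + g) (x k)) atTop (𝓝 (⨅ y, (f + g) y)) :=
  h.iInf_objective_eq hf hg hd hf' ▸ tendsto_atTop_iInf (h.antitone_objective hf hg hd)

end Objective

end IsLinesearchRun

theorem stmt7_general {f g : H → EReal} {f' : H → H} {J : H → ℝ → H} {σ θ δ : ℝ} {x : ℕ → H}
    {a : ℕ → ℝ} (hf : ProperLscConvex f) (hg : ProperLscConvex g)
    (hd : GradOnOpenSupset f f' (edom g)) (hf' : UCBddOnBounded g f')
    (h : IsLinesearchRun g f' J σ θ δ x a) :
    (argminSet f g = ∅ → Tendsto (fun k => ‖x k‖) atTop atTop) ∧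
      Tendsto (fun k => f (x k) + g (x k)) atTop (𝓝 (⨅ y, f y + g y)) := by
  have hfg := hf.add hg hd.subset_edom
  have hvalues := h.tendsto_objective hf hg hd hf'
  refine ⟨fun hS => ?_, hvalues⟩
  have hmin : ∀ z, ∃ y, (f + g) y < (f + g) z := by
    simpa [argminSet, eq_empty_iff_forall_notMem] using hS
  exact tendsto_norm_atTop_of_tendsto_iInf hfg.2.2.1 hfg.quasiconvexOn_univ hmin hvalues

/-- Theorem 4.1(ii): under Assumptions A1–A2, if `f+g` has no minimizer
then the Method-1 iterates satisfy `‖xᵏ‖ → ∞` and `(f+g)(xᵏ) → inf (f+g)`. -/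
theorem stmt7
    (f g : H → EReal) (f' : H → H) (prox : ℝ → H → H)
    (hf : ProperLscConvex f) (hg : ProperLscConvex g)
    (hdom : edom g ⊆ edom f)
    (hdiff : GradOnOpenSupset f f' (edom g))
    (hA2 : UCBddOnBounded g f')
    (hprox : ∀ α : ℝ, 0 < α → ∀ z : H, IsProxPt g α z (prox α z))
    (J : H → ℝ → H) (hJ : ∀ (x : H) (α : ℝ), J x α = prox α (x - α • f' x))
    (σ θ δ : ℝ) (hσ : 0 < σ) (hθ : θ ∈ Set.Ioo (0 : ℝ) 1)
    (hδ : δ ∈ Set.Ioo (0 : ℝ) (1 / 2))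
    (x : ℕ → H) (a : ℕ → ℝ)
    (hx0 : x 0 ∈ edom g)
    (hls : ∀ k : ℕ, LS1Step f' J δ σ θ (x k) (a k))
    (hiter : ∀ k : ℕ, x (k + 1) = J (x k) (a k))
    (hS : argminSet f g = ∅) :
    Tendsto (fun k => ‖x k‖) atTop atTop ∧
      Tendsto (fun k => f (x k) + g (x k)) atTop (nhds (⨅ y, f y + g y)) := by
  have h := stmt7_general hf hg hdiff hA2
    ⟨fun z α hα => hJ z α ▸ hprox α hα _, hσ, hθ, hδ, hx0, hls, hiter⟩
  exact ⟨h.1 hS, h.2⟩
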